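/- Let ζ ∈ (−3, 0], κ ∈ [0,1], m ∈ ℕ, R̄ > 0, A > 0 and R > 0. Let ε = 2^{−N}, let ε̄ ∈ [ε, 1], and let ψ^{ε,ε̄} : ε²ℤ × εℤ → [0,∞) be supported in the ball of radius R̄ ε̄ centered at the origin and satisfy ε³ Σ_{w ∈ ε²ℤ × εℤ} ψ^{ε,ε̄}(w) = 1 and |D̄_ε^k ψ^{ε,ε̄}(z)| ≤ A ε̄^{−3−|k|_s} for all z and all k ∈ ℕ² with |k|_s ≤ m+2. Then for every K^ε : ε²ℤ × εℤ → ℝ supported in the ball of radius R around the origin, writing K^ε_{ε̄} := K^ε ∗_ε ψ^{ε,ε̄}, one has ⦀K^ε − K^ε_{ε̄}⦀_{ζ−κ; m}^{(ε)} ≤ C ε̄^{κ} ⦀K^ε⦀_{ζ; m+2}^{(ε)}, with a constant C depending only on m, ζ, κ, R̄, A and R but not on ε or ε̄. -/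

import Mathlib

open Real

noncomputable section

/-- Forward time difference `D̄_{t,ε²}` on grid functions (indexed form:
`f m j` is the value at the point `(ε² m, ε j)`). -/
def fdT (ε : ℝ) (f : ℤ → ℤ → ℝ) : ℤ → ℤ → ℝ :=
  fun m j => (f (m + 1) j - f m j) / ε ^ 2

/-- Forward space difference `D̄_{x,ε}` on grid functions. -/
def fdX (ε : ℝ) (f : ℤ → ℤ → ℝ) : ℤ → ℤ → ℝ :=
  fun m j => (f m (j + 1) - f m j) / ε

/-- Iterated forward differences `D̄_ε^k = D̄_{t,ε²}^{k₀} D̄_{x,ε}^{k₁}`. -/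
def fdiff (ε : ℝ) (k₀ k₁ : ℕ) (f : ℤ → ℤ → ℝ) : ℤ → ℤ → ℝ :=
  (fdT ε)^[k₀] ((fdX ε)^[k₁] f)

/-- Parabolic norm `‖z‖_s` of the grid point `z = (ε² m, ε j)`. -/
def snorm (ε : ℝ) (m j : ℤ) : ℝ :=
  max (Real.sqrt |ε ^ 2 * (m : ℝ)|) |ε * (j : ℝ)|

/-- `‖z‖_{s,ε} = ‖z‖_s ∨ ε` for the grid point `z = (ε² m, ε j)`. -/
def snormE (ε : ℝ) (m j : ℤ) : ℝ := max (snorm ε m j) ε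

/-- The grid function `K` is supported in the parabolic ball of radius `R`
around the origin. -/
def SuppIn (ε R : ℝ) (K : ℤ → ℤ → ℝ) : Prop :=
  ∀ m j : ℤ, R < snorm ε m j → K m j = 0

/-- `⦀K⦀_{ζ;m}^{(ε)} ≤ M`, expressed through the defining bounds. -/
def SingBound (ε ζ : ℝ) (m : ℕ) (M : ℝ) (K : ℤ → ℤ → ℝ) : Prop :=
  ∀ k₀ k₁ : ℕ, 2 * k₀ + k₁ ≤ m → ∀ mz j : ℤ,
    |fdiff ε k₀ k₁ K mz j| ≤ M * snormE ε mz j ^ (ζ - (2 * (k₀ : ℝ) + (k₁ : ℝ)))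

/-- The discrete space-time convolution `(K ∗_ε ψ)(z) = ε³ Σ_w K(z-w) ψ(w)`
on grid indices. -/
def dconv (ε : ℝ) (K ψ : ℤ → ℤ → ℝ) : ℤ → ℤ → ℝ :=
  fun m j => ε ^ 3 * ∑' p : ℤ × ℤ, K (m - p.1) (j - p.2) * ψ p.1 p.2

/-!
Commuting differences with the convolution, it suffices to bound `D^k K - (D^k K) ∗ ψ` at a point
`z`. If `‖z‖_{s,ε}` is at least twice the radius of the support of `ψ`, this is an average of
increments of `D^k K` along paths that stay at distance at least `‖z‖_{s,ε} / 2` from the origin,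
so one further difference of `K`, in space or in time, controls them. If `‖z‖_{s,ε}` is of order
at most `ε̄`, both terms are bounded separately: for the convolution all differences are put on
`ψ`, and the singularity of `K`, of order `ζ > -3`, is summable over parabolic balls.
-/

section ParabolicNorm

variable {ε : ℝ}

lemma abs_le_snorm_sq (ε : ℝ) (i j : ℤ) : |ε ^ 2 * (i : ℝ)| ≤ snorm ε i j ^ 2 :=
  (Real.sqrt_le_left (le_max_of_le_left (Real.sqrt_nonneg _))).1 (le_max_left _ _)

lemma abs_le_snorm (ε : ℝ) (i j : ℤ) : |ε * (j : ℝ)| ≤ snorm ε i j :=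
  le_max_right _ _

lemma snorm_nonneg (ε : ℝ) (i j : ℤ) : 0 ≤ snorm ε i j :=
  le_max_of_le_left (Real.sqrt_nonneg _)

lemma snorm_neg (ε : ℝ) (i j : ℤ) : snorm ε (-i) (-j) = snorm ε i j := by
  simp [snorm]

lemma snorm_one_zero (hε : 0 ≤ ε) : snorm ε 1 0 = ε := by
  simp [snorm, Real.sqrt_sq hε, hε]

lemma snorm_zero_one (hε : 0 ≤ ε) : snorm ε 0 1 = ε := by
  simp [snorm, abs_of_nonneg hε, hε]

lemma snorm_mono {i j a b : ℤ} (hi : |i| ≤ |a|) (hj : |j| ≤ |b|) :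
    snorm ε i j ≤ snorm ε a b := by
  have hi' : |(i : ℝ)| ≤ |(a : ℝ)| := by exact_mod_cast hi
  have hj' : |(j : ℝ)| ≤ |(b : ℝ)| := by exact_mod_cast hj
  simp only [snorm, abs_mul]
  gcongr

lemma snorm_add_le (ε : ℝ) (i j a b : ℤ) :
    snorm ε (i + a) (j + b) ≤ snorm ε i j + snorm ε a b := by
  have sqrt_add_le {x y : ℝ} (hx : 0 ≤ x) (hy : 0 ≤ y) : √(x + y) ≤ √x + √y := by
    simpa only [Real.sqrt_eq_rpow] using
      Real.rpow_add_le_add_rpow hx hy (by norm_num) (by norm_num)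
  refine max_le ?_ ?_
  · calc √|ε ^ 2 * ((i + a : ℤ) : ℝ)| ≤ √(|ε ^ 2 * (i : ℝ)| + |ε ^ 2 * (a : ℝ)|) := by
          push_cast
          rw [mul_add]
          exact Real.sqrt_le_sqrt (abs_add_le _ _)
      _ ≤ √|ε ^ 2 * (i : ℝ)| + √|ε ^ 2 * (a : ℝ)| := sqrt_add_le (abs_nonneg _) (abs_nonneg _)
      _ ≤ snorm ε i j + snorm ε a b := add_le_add (le_max_left _ _) (le_max_left _ _)
  · push_cast
    rw [mul_add]
    exact (abs_add_le _ _).trans (add_le_add (le_max_right _ _) (le_max_right _ _))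

lemma snorm_le_snormE (ε : ℝ) (i j : ℤ) : snorm ε i j ≤ snormE ε i j :=
  le_max_left _ _

lemma snormE_pos (hε : 0 < ε) (i j : ℤ) : 0 < snormE ε i j :=
  lt_max_of_lt_right hε

lemma snormE_le_add_snorm_sub (ε : ℝ) (i j a b : ℤ) :
    snormE ε i j ≤ snormE ε a b + snorm ε (i - a) (j - b) := by
  refine max_le ?_ ?_
  · have h := snorm_add_le ε a b (i - a) (j - b)
    rw [add_sub_cancel, add_sub_cancel] at h
    exact h.trans (add_le_add_left (snorm_le_snormE ε a b) _)
  · exact (le_max_right (snorm ε a b) ε).trans (le_add_of_nonneg_right (snorm_nonneg ε _ _))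

end ParabolicNorm

section Differences

variable {ε R : ℝ} {f : ℤ → ℤ → ℝ}

lemma fdT_sub (ε : ℝ) (f g : ℤ → ℤ → ℝ) : fdT ε (f - g) = fdT ε f - fdT ε g := by
  funext i j
  simp only [fdT, Pi.sub_apply]
  ring

lemma fdX_sub (ε : ℝ) (f g : ℤ → ℤ → ℝ) : fdX ε (f - g) = fdX ε f - fdX ε g := by
  funext i j
  simp only [fdX, Pi.sub_apply]
  ring

lemma fdT_commute_fdX (ε : ℝ) : Function.Commute (fdT ε) (fdX ε) := by
  intro f
  funext i j
  simp only [fdT, fdX]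
  ring

lemma fdiff_succ_left (ε : ℝ) (k₀ k₁ : ℕ) (f : ℤ → ℤ → ℝ) :
    fdiff ε (k₀ + 1) k₁ f = fdT ε (fdiff ε k₀ k₁ f) :=
  Function.iterate_succ_apply' _ _ _

lemma fdiff_succ_right (ε : ℝ) (k₀ k₁ : ℕ) (f : ℤ → ℤ → ℝ) :
    fdiff ε k₀ (k₁ + 1) f = fdX ε (fdiff ε k₀ k₁ f) := by
  rw [fdiff, Function.iterate_succ_apply']
  exact (fdT_commute_fdX ε).iterate_left k₀ _

lemma fdiff_fdiff (ε : ℝ) (a b k₀ k₁ : ℕ) (f : ℤ → ℤ → ℝ) :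
    fdiff ε a b (fdiff ε k₀ k₁ f) = fdiff ε (k₀ + a) (k₁ + b) f := by
  induction a with
  | zero =>
    induction b with
    | zero => rfl
    | succ b ih => rw [fdiff_succ_right, ih, ← fdiff_succ_right, add_assoc]
  | succ a ih => rw [fdiff_succ_left, ih, ← fdiff_succ_left, add_assoc]

lemma fdiff_sub (ε : ℝ) (k₀ k₁ : ℕ) (f g : ℤ → ℤ → ℝ) :
    fdiff ε k₀ k₁ (f - g) = fdiff ε k₀ k₁ f - fdiff ε k₀ k₁ g := by
  induction k₀ with
  | zero =>
    induction k₁ with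
    | zero => rfl
    | succ n ih => simp only [fdiff_succ_right, ih, fdX_sub]
  | succ n ih => simp only [fdiff_succ_left, ih, fdT_sub]

lemma SuppIn.apply_add_eq_zero (h : SuppIn ε R f) {i j a b : ℤ}
    (hij : R + snorm ε a b < snorm ε i j) : f (i + a) (j + b) = 0 := by
  refine h _ _ ?_
  have htri := snorm_add_le ε (i + a) (j + b) (-a) (-b)
  rw [snorm_neg, add_neg_cancel_right, add_neg_cancel_right] at htri
  linarith

protected lemma SuppIn.fdT (h : SuppIn ε R f) (hε : 0 ≤ ε) : SuppIn ε (R + ε) (fdT ε f) := by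
  intro i j hij
  have hshift : f (i + 1) (j + 0) = 0 :=
    h.apply_add_eq_zero (by rwa [snorm_one_zero hε])
  rw [add_zero] at hshift
  rw [fdT, hshift, h i j (by linarith), sub_self, zero_div]

protected lemma SuppIn.fdX (h : SuppIn ε R f) (hε : 0 ≤ ε) : SuppIn ε (R + ε) (fdX ε f) := by
  intro i j hij
  have hshift : f (i + 0) (j + 1) = 0 :=
    h.apply_add_eq_zero (by rwa [snorm_zero_one hε])
  rw [add_zero] at hshift
  rw [fdX, hshift, h i j (by linarith), sub_self, zero_div]

protected lemma SuppIn.fdiff (h : SuppIn ε R f) (hε : 0 ≤ ε) (k₀ k₁ : ℕ) :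
    SuppIn ε (R + (k₀ + k₁) * ε) (fdiff ε k₀ k₁ f) := by
  induction k₀ with
  | zero =>
    induction k₁ with
    | zero => simpa [fdiff] using h
    | succ n ih =>
      rw [fdiff_succ_right]
      convert ih.fdX hε using 1
      push_cast
      ring
  | succ n ih =>
    rw [fdiff_succ_left]
    convert ih.fdT hε using 1
    push_cast
    ring

protected lemma SingBound.fdiff {ζ M : ℝ} {m n k₀ k₁ : ℕ} (h : SingBound ε ζ (m + n) M f)
    (hk : 2 * k₀ + k₁ ≤ m) :
    SingBound ε (ζ - (2 * (k₀ : ℝ) + k₁)) n M (fdiff ε k₀ k₁ f) := by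
  intro a b hab i j
  rw [fdiff_fdiff]
  convert h (k₀ + a) (k₁ + b) (by omega) i j using 3
  push_cast
  ring

lemma SingBound.abs_le {ζ M : ℝ} {m : ℕ} (h : SingBound ε ζ m M f) (i j : ℤ) :
    |f i j| ≤ M * snormE ε i j ^ ζ := by
  simpa [fdiff] using h 0 0 (Nat.zero_le m) i j

lemma SingBound.nonneg {ζ M : ℝ} {m : ℕ} (h : SingBound ε ζ m M f) (hε : 0 < ε) : 0 ≤ M :=
  nonneg_of_mul_nonneg_left ((abs_nonneg _).trans (h.abs_le 0 0))
    (Real.rpow_pos_of_pos (snormE_pos hε 0 0) ζ)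

end Differences

section PowerSums

variable {α ζ ε h x : ℝ}

lemma one_add_mul_rpow_add_one_le_sub (hα : -1 ≤ α) (hα0 : α ≤ 0) (hx : 0 ≤ x) :
    (1 + α) * (x + 1) ^ α ≤ (x + 1) ^ (1 + α) - x ^ (1 + α) := by
  have hx1 : 0 < x + 1 := by linarith
  have bernoulli : (1 + -(1 / (x + 1))) ^ (1 + α) ≤ 1 + (1 + α) * -(1 / (x + 1)) :=
    rpow_one_add_le_one_add_mul_self (by rw [neg_le_neg_iff, div_le_one hx1]; linarith)
      (by linarith) (by linarith)
  have hquot : 1 + -(1 / (x + 1)) = x / (x + 1) := by field_simp; ring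
  have hpow : (x + 1) ^ (1 + α) = (x + 1) * (x + 1) ^ α := by
    rw [Real.rpow_add hx1, Real.rpow_one]
  rw [hquot, Real.div_rpow hx hx1.le, div_le_iff₀ (by positivity), hpow] at bernoulli
  have hcancel : (1 + (1 + α) * -(1 / (x + 1))) * ((x + 1) * (x + 1) ^ α) =
      (x + 1) * (x + 1) ^ α - (1 + α) * (x + 1) ^ α := by
    field_simp
    ring
  rw [hpow]
  linarith

lemma sum_range_add_one_rpow_le (hα : -1 < α) (hα0 : α ≤ 0) (n : ℕ) :
    ∑ k ∈ Finset.range n, ((k : ℝ) + 1) ^ α ≤ (n : ℝ) ^ (1 + α) / (1 + α) := by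
  have hα1 : 0 < 1 + α := by linarith
  rw [le_div_iff₀' hα1]
  induction n with
  | zero => simp [Real.zero_rpow hα1.ne']
  | succ n ih =>
    rw [Finset.sum_range_succ, mul_add]
    push_cast
    linarith [one_add_mul_rpow_add_one_le_sub hα.le hα0 (Nat.cast_nonneg n)]

lemma sum_Icc_max_abs_one_rpow_le (hα : -1 < α) (hα0 : α ≤ 0) (n : ℕ) :
    ∑ j ∈ Finset.Icc (-n : ℤ) n, max |(j : ℝ)| 1 ^ α ≤ 1 + 2 / (1 + α) * (n : ℝ) ^ (1 + α) := by
  have heven : Function.Even fun j : ℤ => max |(j : ℝ)| 1 ^ α := fun j => by simp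
  have hmax (k : ℕ) : max |((k : ℝ) + 1)| 1 = k + 1 := by
    rw [abs_of_nonneg (by positivity), max_eq_left (by linarith [k.cast_nonneg (α := ℝ)])]
  calc ∑ j ∈ Finset.Icc (-n : ℤ) n, max |(j : ℝ)| 1 ^ α
      = 1 + 2 * ∑ k ∈ Finset.range n, ((k : ℝ) + 1) ^ α := by
        rw [Finset.sum_Icc_of_even_eq_range heven, Finset.sum_range_succ']
        simp [hmax]
        ring
    _ ≤ 1 + 2 * ((n : ℝ) ^ (1 + α) / (1 + α)) := by
        gcongr
        exact sum_range_add_one_rpow_le hα hα0 n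
    _ = 1 + 2 / (1 + α) * (n : ℝ) ^ (1 + α) := by ring

/-- The indices `j` of the points `h * j` of the grid `h ℤ` in the interval `[-x, x]`. -/
def gridIcc (h x : ℝ) : Finset ℤ := Finset.Icc (-(⌊x / h⌋₊ : ℤ)) ⌊x / h⌋₊

lemma mem_gridIcc {j : ℤ} (hh : 0 < h) (hj : |h * (j : ℝ)| ≤ x) : j ∈ gridIcc h x := by
  rw [abs_mul, abs_of_pos hh, mul_comm, ← le_div_iff₀ hh] at hj
  have hfloor : j.natAbs ≤ ⌊x / h⌋₊ := Nat.le_floor (by rwa [Nat.cast_natAbs, Int.cast_abs])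
  rw [gridIcc, Finset.mem_Icc]
  omega

lemma mul_sum_gridIcc_rpow_le (hα : -1 < α) (hα0 : α ≤ 0) (hh : 0 < h) (hx : h ≤ x) :
    h * ∑ j ∈ gridIcc h x, max |h * (j : ℝ)| h ^ α ≤ (1 + 2 / (1 + α)) * x ^ (1 + α) := by
  have hα1 : 0 < 1 + α := by linarith
  have hx0 : 0 < x := hh.trans_le hx
  have hscale (j : ℤ) : max |h * (j : ℝ)| h ^ α = h ^ α * max |(j : ℝ)| 1 ^ α := by
    rw [← Real.mul_rpow hh.le (by positivity), mul_max_of_nonneg _ _ hh.le, mul_one, abs_mul,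
      abs_of_pos hh]
  calc h * ∑ j ∈ gridIcc h x, max |h * (j : ℝ)| h ^ α
      = h ^ (1 + α) * ∑ j ∈ gridIcc h x, max |(j : ℝ)| 1 ^ α := by
        simp only [hscale, ← Finset.mul_sum]
        rw [Real.rpow_add hh, Real.rpow_one, mul_assoc]
    _ ≤ h ^ (1 + α) * (1 + 2 / (1 + α) * (⌊x / h⌋₊ : ℝ) ^ (1 + α)) := by
        gcongr
        exact sum_Icc_max_abs_one_rpow_le hα hα0 _
    _ ≤ h ^ (1 + α) * ((x / h) ^ (1 + α) + 2 / (1 + α) * (x / h) ^ (1 + α)) := by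
        gcongr
        · exact Real.one_le_rpow ((one_le_div hh).2 hx) hα1.le
        · exact Nat.floor_le (by positivity)
    _ = (1 + 2 / (1 + α)) * x ^ (1 + α) := by
        rw [Real.div_rpow hx0.le hh.le]
        field_simp

/-- The indices of the points of `ε² ℤ × ε ℤ` in the parabolic ball of radius `r` around the
origin, encoded as a product so that sums over it factorize. -/
def parabolicBall (ε r : ℝ) : Finset (ℤ × ℤ) := gridIcc (ε ^ 2) (r ^ 2) ×ˢ gridIcc ε r

lemma lt_snorm_of_notMem_parabolicBall {r : ℝ} (hε : 0 < ε) {p : ℤ × ℤ}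
    (hp : p ∉ parabolicBall ε r) : r < snorm ε p.1 p.2 := by
  contrapose! hp
  have hsq : snorm ε p.1 p.2 ^ 2 ≤ r ^ 2 := pow_le_pow_left₀ (snorm_nonneg ε _ _) hp 2
  exact Finset.mem_product.2 ⟨mem_gridIcc (by positivity) ((abs_le_snorm_sq ε _ _).trans hsq),
    mem_gridIcc hε ((abs_le_snorm ε _ _).trans hp)⟩

/- The exponent is split evenly over the scaling dimension `3`, with `2` parts for time and `1`
for space, so that each one-dimensional factor is summable as soon as `ζ > -3`. -/
lemma snormE_rpow_le (hε : 0 < ε) (hζ : ζ ≤ 0) (i j : ℤ) :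
    snormE ε i j ^ ζ ≤
      max |ε ^ 2 * (i : ℝ)| (ε ^ 2) ^ (ζ / 3) * max |ε * (j : ℝ)| ε ^ (ζ / 3) := by
  have hs := snormE_pos hε i j
  have htime : max |ε ^ 2 * (i : ℝ)| (ε ^ 2) ≤ snormE ε i j ^ 2 :=
    max_le ((abs_le_snorm_sq ε i j).trans
        (pow_le_pow_left₀ (snorm_nonneg ε i j) (snorm_le_snormE ε i j) 2))
      (pow_le_pow_left₀ hε.le (le_max_right _ _) 2)
  have hspace : max |ε * (j : ℝ)| ε ≤ snormE ε i j :=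
    max_le_max (abs_le_snorm ε i j) le_rfl
  calc snormE ε i j ^ ζ = (snormE ε i j ^ 2) ^ (ζ / 3) * snormE ε i j ^ (ζ / 3) := by
        rw [← Real.rpow_two, ← Real.rpow_mul hs.le, ← Real.rpow_add hs]
        ring_nf
    _ ≤ _ := mul_le_mul
        (Real.rpow_le_rpow_of_nonpos (by positivity) htime (by linarith))
        (Real.rpow_le_rpow_of_nonpos (by positivity) hspace (by linarith))
        (by positivity) (by positivity)

lemma sum_parabolicBall_snormE_rpow_le (hε : 0 < ε) (hζ : -3 < ζ) (hζ0 : ζ ≤ 0) (hx : ε ≤ x) :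
    ε ^ 3 * ∑ p ∈ parabolicBall ε x, snormE ε p.1 p.2 ^ ζ ≤
      (1 + 2 / (1 + ζ / 3)) ^ 2 * x ^ (3 + ζ) := by
  have hx0 : 0 < x := hε.trans_le hx
  have hα : 0 < 1 + ζ / 3 := by linarith
  calc ε ^ 3 * ∑ p ∈ parabolicBall ε x, snormE ε p.1 p.2 ^ ζ
      ≤ ε ^ 3 * ∑ p ∈ parabolicBall ε x, max |ε ^ 2 * (p.1 : ℝ)| (ε ^ 2) ^ (ζ / 3) *
          max |ε * (p.2 : ℝ)| ε ^ (ζ / 3) := by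
        gcongr
        exact snormE_rpow_le hε hζ0 _ _
    _ = (ε ^ 2 * ∑ i ∈ gridIcc (ε ^ 2) (x ^ 2), max |ε ^ 2 * (i : ℝ)| (ε ^ 2) ^ (ζ / 3)) *
          (ε * ∑ j ∈ gridIcc ε x, max |ε * (j : ℝ)| ε ^ (ζ / 3)) := by
        rw [mul_mul_mul_comm, ← pow_succ, Finset.sum_mul_sum, parabolicBall, Finset.sum_product]
    _ ≤ ((1 + 2 / (1 + ζ / 3)) * (x ^ 2) ^ (1 + ζ / 3)) *
          ((1 + 2 / (1 + ζ / 3)) * x ^ (1 + ζ / 3)) :=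
        mul_le_mul
          (mul_sum_gridIcc_rpow_le (by linarith) (by linarith) (by positivity) (by gcongr))
          (mul_sum_gridIcc_rpow_le (by linarith) (by linarith) hε hx)
          (by positivity) (by positivity)
    _ = (1 + 2 / (1 + ζ / 3)) ^ 2 * x ^ (3 + ζ) := by
        have hsplit : x ^ (3 + ζ) = (x ^ 2) ^ (1 + ζ / 3) * x ^ (1 + ζ / 3) := by
          rw [← Real.rpow_two, ← Real.rpow_mul hx0.le, ← Real.rpow_add hx0]
          ring_nf
        rw [hsplit]
        ring

end PowerSums

section Convolution

variable {ε r : ℝ} {K ψ : ℤ → ℤ → ℝ}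

/-- The series defining the convolution `dconv ε K ψ` converges at every grid point; otherwise
`dconv` takes the junk value of `tsum` there. -/
def Convolvable (K ψ : ℤ → ℤ → ℝ) : Prop :=
  ∀ i j : ℤ, Summable fun p : ℤ × ℤ => K (i - p.1) (j - p.2) * ψ p.1 p.2

lemma dconv_comm (ε : ℝ) (K ψ : ℤ → ℤ → ℝ) : dconv ε K ψ = dconv ε ψ K := by
  funext i j
  rw [dconv, dconv, ← (Equiv.subLeft ((i, j) : ℤ × ℤ)).tsum_eq]
  simp [mul_comm]

lemma Convolvable.symm (h : Convolvable K ψ) : Convolvable ψ K := by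
  intro i j
  rw [← (Equiv.subLeft ((i, j) : ℤ × ℤ)).summable_iff]
  simpa [Function.comp_def, mul_comm] using h i j

lemma SuppIn.summable_mul (h : SuppIn ε r ψ) (hε : 0 < ε) (g : ℤ × ℤ → ℝ) :
    Summable fun p : ℤ × ℤ => g p * ψ p.1 p.2 :=
  summable_of_ne_finset_zero (s := parabolicBall ε r) fun p hp => by
    rw [h _ _ (lt_snorm_of_notMem_parabolicBall hε hp), mul_zero]

lemma SuppIn.convolvable (h : SuppIn ε r ψ) (hε : 0 < ε) (K : ℤ → ℤ → ℝ) : Convolvable K ψ :=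
  fun i j => h.summable_mul hε fun p => K (i - p.1) (j - p.2)

lemma fdT_translate_mul (ε : ℝ) (K ψ : ℤ → ℤ → ℝ) (i j : ℤ) (p : ℤ × ℤ) :
    fdT ε K (i - p.1) (j - p.2) * ψ p.1 p.2 =
      (K (i + 1 - p.1) (j - p.2) * ψ p.1 p.2 - K (i - p.1) (j - p.2) * ψ p.1 p.2) / ε ^ 2 := by
  rw [fdT, add_sub_right_comm]
  ring

lemma fdX_translate_mul (ε : ℝ) (K ψ : ℤ → ℤ → ℝ) (i j : ℤ) (p : ℤ × ℤ) :
    fdX ε K (i - p.1) (j - p.2) * ψ p.1 p.2 =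
      (K (i - p.1) (j + 1 - p.2) * ψ p.1 p.2 - K (i - p.1) (j - p.2) * ψ p.1 p.2) / ε := by
  rw [fdX, add_sub_right_comm]
  ring

protected lemma Convolvable.fdT (h : Convolvable K ψ) (ε : ℝ) : Convolvable (fdT ε K) ψ := by
  intro i j
  simpa only [fdT_translate_mul] using ((h (i + 1) j).sub (h i j)).div_const (ε ^ 2)

protected lemma Convolvable.fdX (h : Convolvable K ψ) (ε : ℝ) : Convolvable (fdX ε K) ψ := by
  intro i j
  simpa only [fdX_translate_mul] using ((h i (j + 1)).sub (h i j)).div_const ε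

protected lemma Convolvable.fdiff (h : Convolvable K ψ) (ε : ℝ) (k₀ k₁ : ℕ) :
    Convolvable (fdiff ε k₀ k₁ K) ψ := by
  induction k₀ with
  | zero =>
    induction k₁ with
    | zero => exact h
    | succ n ih => exact fdiff_succ_right ε 0 n K ▸ ih.fdX ε
  | succ n ih => exact fdiff_succ_left ε n k₁ K ▸ ih.fdT ε

lemma Convolvable.fdT_dconv (h : Convolvable K ψ) (ε : ℝ) :
    fdT ε (dconv ε K ψ) = dconv ε (fdT ε K) ψ := by
  funext i j
  rw [fdT]
  simp only [dconv, fdT_translate_mul, tsum_div_const, (h (i + 1) j).tsum_sub (h i j)]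
  ring

lemma Convolvable.fdX_dconv (h : Convolvable K ψ) (ε : ℝ) :
    fdX ε (dconv ε K ψ) = dconv ε (fdX ε K) ψ := by
  funext i j
  rw [fdX]
  simp only [dconv, fdX_translate_mul, tsum_div_const, (h i (j + 1)).tsum_sub (h i j)]
  ring

lemma Convolvable.fdiff_dconv (h : Convolvable K ψ) (ε : ℝ) (k₀ k₁ : ℕ) :
    fdiff ε k₀ k₁ (dconv ε K ψ) = dconv ε (fdiff ε k₀ k₁ K) ψ := by
  induction k₀ with
  | zero =>
    induction k₁ with
    | zero => rfl
    | succ n ih => rw [fdiff_succ_right, ih, (h.fdiff ε 0 n).fdX_dconv, ← fdiff_succ_right]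
  | succ n ih => rw [fdiff_succ_left, ih, (h.fdiff ε n k₁).fdT_dconv, ← fdiff_succ_left]

lemma abs_sub_dconv_le (hε : 0 < ε) (hψ_nonneg : ∀ i j, 0 ≤ ψ i j) (hψ_supp : SuppIn ε r ψ)
    (hψ_mass : ε ^ 3 * ∑' p : ℤ × ℤ, ψ p.1 p.2 = 1) {G : ℤ → ℤ → ℝ} {i j : ℤ} {B : ℝ}
    (hB : ∀ a b, snorm ε a b ≤ r → |G i j - G (i - a) (j - b)| ≤ B) :
    |G i j - dconv ε G ψ i j| ≤ B := by
  have hsum : HasSum (fun p : ℤ × ℤ => B * ψ p.1 p.2) (B * ∑' p : ℤ × ℤ, ψ p.1 p.2) := by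
    rw [← tsum_mul_left]
    exact (hψ_supp.summable_mul hε fun _ => B).hasSum
  have hterm (p : ℤ × ℤ) : ‖(G i j - G (i - p.1) (j - p.2)) * ψ p.1 p.2‖ ≤ B * ψ p.1 p.2 := by
    rw [Real.norm_eq_abs, abs_mul, abs_of_nonneg (hψ_nonneg _ _)]
    rcases le_or_gt (snorm ε p.1 p.2) r with hp | hp
    · exact mul_le_mul_of_nonneg_right (hB _ _ hp) (hψ_nonneg _ _)
    · simp [hψ_supp _ _ hp]
  have haverage : G i j - dconv ε G ψ i j =
      ε ^ 3 * ∑' p : ℤ × ℤ, (G i j - G (i - p.1) (j - p.2)) * ψ p.1 p.2 := by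
    simp only [sub_mul]
    rw [(hψ_supp.summable_mul hε fun _ => G i j).tsum_sub (hψ_supp.convolvable hε G i j),
      tsum_mul_left, dconv]
    linear_combination (-G i j) * hψ_mass
  calc |G i j - dconv ε G ψ i j|
      = ε ^ 3 * |∑' p : ℤ × ℤ, (G i j - G (i - p.1) (j - p.2)) * ψ p.1 p.2| := by
        rw [haverage, abs_mul, abs_of_pos (by positivity)]
    _ ≤ ε ^ 3 * (B * ∑' p : ℤ × ℤ, ψ p.1 p.2) := by
        gcongr
        exact tsum_of_norm_bounded hsum hterm
    _ = B := by linear_combination B * hψ_mass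

lemma SingBound.abs_dconv_le {ζ M D x : ℝ} {m : ℕ} {φ : ℤ → ℤ → ℝ} {i j : ℤ}
    (hK : SingBound ε ζ m M K) (hε : 0 < ε) (hζ : -3 < ζ) (hζ0 : ζ ≤ 0)
    (hφ : ∀ a b, |φ a b| ≤ D) (hφ_supp : SuppIn ε r φ) (hεx : ε ≤ x)
    (hx : snorm ε i j + r ≤ x) :
    |dconv ε φ K i j| ≤ D * M * ((1 + 2 / (1 + ζ / 3)) ^ 2 * x ^ (3 + ζ)) := by
  have hM : 0 ≤ M := hK.nonneg hε
  have hD : 0 ≤ D := (abs_nonneg _).trans (hφ 0 0)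
  have hsupp : ∀ p ∉ parabolicBall ε x, φ (i - p.1) (j - p.2) * K p.1 p.2 = 0 := by
    intro p hp
    have hfar := lt_snorm_of_notMem_parabolicBall hε hp
    have htri := snorm_add_le ε i j (-(i - p.1)) (-(j - p.2))
    rw [snorm_neg, neg_sub, neg_sub, add_sub_cancel, add_sub_cancel] at htri
    rw [hφ_supp _ _ (by linarith), zero_mul]
  have hterm (p : ℤ × ℤ) :
      |φ (i - p.1) (j - p.2) * K p.1 p.2| ≤ D * M * snormE ε p.1 p.2 ^ ζ := by
    rw [abs_mul, mul_assoc]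
    exact mul_le_mul (hφ _ _) (hK.abs_le _ _) (abs_nonneg _) hD
  calc |dconv ε φ K i j|
      = ε ^ 3 * |∑ p ∈ parabolicBall ε x, φ (i - p.1) (j - p.2) * K p.1 p.2| := by
        rw [dconv, tsum_eq_sum hsupp, abs_mul, abs_of_pos (by positivity)]
    _ ≤ ε ^ 3 * ∑ p ∈ parabolicBall ε x, D * M * snormE ε p.1 p.2 ^ ζ := by
        gcongr
        exact (Finset.abs_sum_le_sum_abs _ _).trans (Finset.sum_le_sum fun p _ => hterm p)
    _ = D * M * (ε ^ 3 * ∑ p ∈ parabolicBall ε x, snormE ε p.1 p.2 ^ ζ) := by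
        rw [← Finset.mul_sum]
        ring
    _ ≤ D * M * ((1 + 2 / (1 + ζ / 3)) ^ 2 * x ^ (3 + ζ)) :=
        mul_le_mul_of_nonneg_left (sum_parabolicBall_snormE_rpow_le hε hζ hζ0 hεx)
          (mul_nonneg hD hM)

end Convolution

section Increments

variable {ε : ℝ} {G : ℤ → ℤ → ℝ}

lemma abs_sub_le_of_abs_succ_sub_le {f : ℤ → ℝ} {a b : ℤ} {B : ℝ}
    (h : ∀ c ∈ Set.uIcc a b, |f (c + 1) - f c| ≤ B) : |f a - f b| ≤ |(a - b : ℝ)| * B := by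
  wlog hab : a ≤ b generalizing a b
  · rw [abs_sub_comm (f a), abs_sub_comm (a : ℝ)]
    exact this (by rwa [Set.uIcc_comm]) (le_of_not_ge hab)
  obtain ⟨n, rfl⟩ := Int.le.dest hab
  rw [Set.uIcc_of_le hab] at h
  have hsum := dist_le_range_sum_of_dist_le (f := fun k : ℕ => f (a + k)) (d := fun _ => B) n
    fun {k} hk => by
      rw [dist_comm, Real.dist_eq, Nat.cast_succ, ← add_assoc]
      exact h _ ⟨by omega, by omega⟩
  simpa [Real.dist_eq] using hsum

lemma abs_sub_le_of_abs_fdT_le (hε : 0 < ε) {i i' j : ℤ} {B : ℝ}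
    (h : ∀ c ∈ Set.uIcc i i', |fdT ε G c j| ≤ B) :
    |G i j - G i' j| ≤ |ε ^ 2 * ((i - i' : ℤ) : ℝ)| * B := by
  have hε2 : 0 < ε ^ 2 := by positivity
  have hwalk : |G i j - G i' j| ≤ |(i - i' : ℝ)| * (ε ^ 2 * B) :=
    abs_sub_le_of_abs_succ_sub_le (f := fun c => G c j) fun c hc => by
      simpa [fdT, abs_div, div_le_iff₀' hε2] using h c hc
  rw [abs_mul, abs_of_pos hε2, Int.cast_sub]
  linarith

lemma abs_sub_le_of_abs_fdX_le (hε : 0 < ε) {i j j' : ℤ} {B : ℝ}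
    (h : ∀ c ∈ Set.uIcc j j', |fdX ε G i c| ≤ B) :
    |G i j - G i j'| ≤ |ε * ((j - j' : ℤ) : ℝ)| * B := by
  have hwalk : |G i j - G i j'| ≤ |(j - j' : ℝ)| * (ε * B) :=
    abs_sub_le_of_abs_succ_sub_le (f := fun c => G i c) fun c hc => by
      simpa [fdX, abs_div, abs_of_pos hε, div_le_iff₀' hε] using h c hc
  rw [abs_mul, abs_of_pos hε, Int.cast_sub]
  linarith

lemma half_snormE_le_of_snorm_sub_le {u : ℝ} {i j a b : ℤ} (hu : 2 * u ≤ snormE ε i j)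
    (hab : snorm ε (i - a) (j - b) ≤ u) : snormE ε i j / 2 ≤ snormE ε a b := by
  linarith [snormE_le_add_snorm_sub ε i j a b]

lemma SingBound.abs_sub_space_translate_le {β M u : ℝ} {m : ℕ} (hG : SingBound ε β m M G)
    (hm : 1 ≤ m) (hε : 0 < ε) (hβ : β ≤ 1) {i j b : ℤ} (hu : 2 * u ≤ snormE ε i j)
    (hb : snorm ε 0 b ≤ u) :
    |G i j - G i (j - b)| ≤ u * (M * (snormE ε i j / 2) ^ (β - 1)) := by
  have hM : 0 ≤ M := hG.nonneg hε
  have hs : 0 < snormE ε i j / 2 := half_pos (snormE_pos hε i j)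
  have hpath : ∀ c ∈ Set.uIcc j (j - b),
      |fdX ε G i c| ≤ M * (snormE ε i j / 2) ^ (β - 1) := fun c hc => by
    have hc' : |j - c| ≤ |b| := by simpa [abs_sub_comm] using Set.abs_sub_left_of_mem_uIcc hc
    have hlow := half_snormE_le_of_snorm_sub_le hu
      ((snorm_mono (i := i - i) (by simp) hc').trans hb)
    have hbound : |fdX ε G i c| ≤ M * snormE ε i c ^ (β - 1) := by
      simpa [fdiff] using hG 0 1 hm i c
    exact hbound.trans (mul_le_mul_of_nonneg_left
      (Real.rpow_le_rpow_of_nonpos hs hlow (by linarith)) hM)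
  refine (abs_sub_le_of_abs_fdX_le hε hpath).trans ?_
  rw [sub_sub_cancel]
  gcongr
  exact (abs_le_snorm ε 0 b).trans hb

lemma SingBound.abs_sub_time_translate_le {β M u : ℝ} {m : ℕ} (hG : SingBound ε β m M G)
    (hm : 2 ≤ m) (hε : 0 < ε) (hβ : β ≤ 2) {i j a b : ℤ} (hu : 2 * u ≤ snormE ε i j)
    (hab : snorm ε a b ≤ u) :
    |G i (j - b) - G (i - a) (j - b)| ≤ u ^ 2 * (M * (snormE ε i j / 2) ^ (β - 2)) := by
  have hM : 0 ≤ M := hG.nonneg hε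
  have hs : 0 < snormE ε i j / 2 := half_pos (snormE_pos hε i j)
  have hpath : ∀ c ∈ Set.uIcc i (i - a),
      |fdT ε G c (j - b)| ≤ M * (snormE ε i j / 2) ^ (β - 2) := fun c hc => by
    have hc' : |i - c| ≤ |a| := by simpa [abs_sub_comm] using Set.abs_sub_left_of_mem_uIcc hc
    have hlow := half_snormE_le_of_snorm_sub_le hu
      ((snorm_mono hc' (by rw [sub_sub_cancel])).trans hab)
    have hbound : |fdT ε G c (j - b)| ≤ M * snormE ε c (j - b) ^ (β - 2) := by
      simpa [fdiff] using hG 1 0 hm c (j - b)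
    exact hbound.trans (mul_le_mul_of_nonneg_left
      (Real.rpow_le_rpow_of_nonpos hs hlow (by linarith)) hM)
  refine (abs_sub_le_of_abs_fdT_le hε hpath).trans ?_
  rw [sub_sub_cancel]
  gcongr
  exact (abs_le_snorm_sq ε a b).trans (pow_le_pow_left₀ (snorm_nonneg ε a b) hab 2)

lemma SingBound.abs_sub_translate_le {β M u : ℝ} (hG : SingBound ε β 2 M G) (hε : 0 < ε)
    (hβ : β ≤ 1) {i j a b : ℤ} (hu : 2 * u ≤ snormE ε i j) (hab : snorm ε a b ≤ u) :
    |G i j - G (i - a) (j - b)| ≤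
      M * (u * (snormE ε i j / 2) ^ (β - 1) + u ^ 2 * (snormE ε i j / 2) ^ (β - 2)) := by
  have hb : snorm ε 0 b ≤ u := (snorm_mono (by simp) le_rfl).trans hab
  have hspace := hG.abs_sub_space_translate_le one_le_two hε hβ hu hb
  have htime := hG.abs_sub_time_translate_le le_rfl hε (hβ.trans one_le_two) hu hab
  linarith [abs_sub_le (G i j) (G i (j - b)) (G (i - a) (j - b))]

end Increments

section Regimes

variable {ε ζ κ β M : ℝ} {m : ℕ} {K G ψ : ℤ → ℤ → ℝ} {i j : ℤ}

lemma rpow_mul_rpow_sub_le_of_le {u t e : ℝ} (hu : 0 < u) (hut : u ≤ t) (he : κ ≤ e) (β : ℝ) :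
    u ^ e * t ^ (β - e) ≤ u ^ κ * t ^ (β - κ) := by
  have ht : 0 < t := hu.trans_le hut
  calc u ^ e * t ^ (β - e) = u ^ κ * t ^ (β - e) * u ^ (e - κ) := by
        rw [mul_right_comm, ← Real.rpow_add hu, add_sub_cancel]
    _ ≤ u ^ κ * t ^ (β - e) * t ^ (e - κ) := by
        gcongr
    _ = u ^ κ * t ^ (β - κ) := by
        rw [mul_assoc, ← Real.rpow_add ht, sub_add_sub_cancel]

lemma rpow_le_rpow_mul_rpow_of_le_mul {b c s γ P : ℝ} (hb : 0 < b) (hc : 1 ≤ c) (hs : 0 < s)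
    (hsb : s ≤ c * b) (hγ : γ ≤ 0) (hP : -γ ≤ P) : b ^ γ ≤ c ^ P * s ^ γ := by
  have hc0 : 0 < c := by linarith
  calc b ^ γ = c ^ (-γ) * (c * b) ^ γ := by
        rw [Real.mul_rpow hc0.le hb.le, ← mul_assoc, ← Real.rpow_add hc0, neg_add_cancel,
          Real.rpow_zero, one_mul]
    _ ≤ c ^ P * s ^ γ := mul_le_mul (Real.rpow_le_rpow_of_exponent_le hc hP)
        (Real.rpow_le_rpow_of_nonpos hs hsb hγ) (by positivity) (by positivity)

lemma SingBound.abs_sub_dconv_le_of_far {r : ℝ} (hG : SingBound ε β 2 M G) (hε : 0 < ε)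
    (hβ : β ≤ 1) (hκ : κ ≤ 1) (hr : 0 < r) (hψ_nonneg : ∀ i j, 0 ≤ ψ i j)
    (hψ_supp : SuppIn ε r ψ) (hψ_mass : ε ^ 3 * ∑' p : ℤ × ℤ, ψ p.1 p.2 = 1)
    (hfar : 2 * r ≤ snormE ε i j) :
    |G i j - dconv ε G ψ i j| ≤ 2 * M * r ^ κ * (snormE ε i j / 2) ^ (β - κ) := by
  refine abs_sub_dconv_le hε hψ_nonneg hψ_supp hψ_mass fun a b hab =>
    (hG.abs_sub_translate_le hε hβ hfar hab).trans ?_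
  have hM : 0 ≤ M := hG.nonneg hε
  have hr_le : r ≤ snormE ε i j / 2 := by linarith
  have hspace := rpow_mul_rpow_sub_le_of_le hr hr_le hκ β
  have htime := rpow_mul_rpow_sub_le_of_le hr hr_le (hκ.trans one_le_two) β
  rw [Real.rpow_one] at hspace
  rw [Real.rpow_two] at htime
  linarith [mul_le_mul_of_nonneg_left (add_le_add hspace htime) hM]

lemma SingBound.abs_fdiff_sub_dconv_le_of_far {r : ℝ} {k₀ k₁ : ℕ}
    (hK : SingBound ε ζ (m + 2) M K) (hε : 0 < ε) (hζ : ζ ≤ κ) (hκ : κ ≤ 1) (hr : 0 < r)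
    (hψ_nonneg : ∀ i j, 0 ≤ ψ i j) (hψ_supp : SuppIn ε r ψ)
    (hψ_mass : ε ^ 3 * ∑' p : ℤ × ℤ, ψ p.1 p.2 = 1) (hk : 2 * k₀ + k₁ ≤ m)
    (hfar : 2 * r ≤ snormE ε i j) :
    |fdiff ε k₀ k₁ K i j - fdiff ε k₀ k₁ (dconv ε K ψ) i j| ≤
      2 * 2 ^ (κ - ζ + m) * r ^ κ * M * snormE ε i j ^ (ζ - κ - (2 * (k₀ : ℝ) + k₁)) := by
  have hM : 0 ≤ M := hK.nonneg hε
  have hs := snormE_pos hε i j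
  have hk_le : (2 * k₀ + k₁ : ℝ) ≤ m := by exact_mod_cast hk
  rw [(hψ_supp.convolvable hε K).fdiff_dconv]
  calc |fdiff ε k₀ k₁ K i j - dconv ε (fdiff ε k₀ k₁ K) ψ i j|
      ≤ 2 * M * r ^ κ * (snormE ε i j / 2) ^ (ζ - (2 * (k₀ : ℝ) + k₁) - κ) :=
        (hK.fdiff hk).abs_sub_dconv_le_of_far hε (by linarith) hκ hr hψ_nonneg hψ_supp
          hψ_mass hfar
    _ ≤ 2 * M * r ^ κ *
          (2 ^ (κ - ζ + m) * snormE ε i j ^ (ζ - (2 * (k₀ : ℝ) + k₁) - κ)) := by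
        gcongr
        exact rpow_le_rpow_mul_rpow_of_le_mul (half_pos hs) one_le_two hs (by linarith)
          (by linarith) (by linarith)
    _ = _ := by
        rw [sub_right_comm]
        ring

lemma SingBound.abs_le_of_near {ρ : ℝ} (hG : SingBound ε β m M G) (hε : 0 < ε) (hκ : 0 ≤ κ)
    (hnear : snormE ε i j ≤ ρ) : |G i j| ≤ ρ ^ κ * M * snormE ε i j ^ (β - κ) := by
  have hM : 0 ≤ M := hG.nonneg hε
  have hs := snormE_pos hε i j
  calc |G i j| ≤ M * snormE ε i j ^ β := hG.abs_le i j
    _ = snormE ε i j ^ κ * M * snormE ε i j ^ (β - κ) := by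
        rw [mul_right_comm, ← Real.rpow_add hs, add_sub_cancel, mul_comm]
    _ ≤ ρ ^ κ * M * snormE ε i j ^ (β - κ) := by gcongr

lemma SingBound.abs_fdiff_dconv_le_of_near {εb A c Rbar : ℝ} {n k₀ k₁ : ℕ}
    (hK : SingBound ε ζ n M K) (hε : 0 < ε) (hεb : ε ≤ εb) (hζ : ζ ∈ Set.Ioc (-3) 0)
    (hκ : 0 ≤ κ) (hA : 0 ≤ A) (hRbar : 0 ≤ Rbar) (hψ_supp : SuppIn ε (Rbar * εb) ψ)
    (hψ_fdiff : ∀ a b, |fdiff ε k₀ k₁ ψ a b| ≤ A * εb ^ (-3 - (2 * (k₀ : ℝ) + k₁)))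
    (hk : 2 * k₀ + k₁ ≤ m) (hc : 1 ≤ c) (hnear : snormE ε i j ≤ c * εb) :
    |fdiff ε k₀ k₁ (dconv ε K ψ) i j| ≤
      A * (1 + 2 / (1 + ζ / 3)) ^ 2 * (c + Rbar + m) ^ (3 + ζ) * c ^ (κ - ζ + m) * εb ^ κ * M *
        snormE ε i j ^ (ζ - κ - (2 * (k₀ : ℝ) + k₁)) := by
  have hM : 0 ≤ M := hK.nonneg hε
  have hεb0 : 0 < εb := hε.trans_le hεb
  have hk_le : (2 * k₀ + k₁ : ℝ) ≤ m := by exact_mod_cast hk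
  have hradius : snorm ε i j + (Rbar * εb + (k₀ + k₁) * ε) ≤ (c + Rbar + m) * εb := by
    have hshift : (k₀ + k₁ : ℝ) * ε ≤ m * εb :=
      mul_le_mul (by linarith) hεb hε.le m.cast_nonneg
    linarith [snorm_le_snormE ε i j]
  have hε_le : ε ≤ (c + Rbar + m) * εb :=
    hεb.trans (le_mul_of_one_le_left hεb0.le (by linarith [m.cast_nonneg (α := ℝ)]))
  have hconv := hK.abs_dconv_le hε hζ.1 hζ.2 hψ_fdiff (hψ_supp.fdiff hε.le k₀ k₁) hε_le hradius
  have hpow : εb ^ (-3 - (2 * (k₀ : ℝ) + k₁)) * εb ^ (3 + ζ) =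
      εb ^ κ * εb ^ (ζ - κ - (2 * (k₀ : ℝ) + k₁)) := by
    rw [← Real.rpow_add hεb0, ← Real.rpow_add hεb0]
    ring_nf
  rw [dconv_comm, (hψ_supp.convolvable hε K).symm.fdiff_dconv]
  calc |dconv ε (fdiff ε k₀ k₁ ψ) K i j|
      ≤ A * (1 + 2 / (1 + ζ / 3)) ^ 2 * (c + Rbar + m) ^ (3 + ζ) * εb ^ κ * M *
          εb ^ (ζ - κ - (2 * (k₀ : ℝ) + k₁)) := by
        rw [Real.mul_rpow (by positivity) hεb0.le] at hconv
        linear_combination hconv +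
          A * (1 + 2 / (1 + ζ / 3)) ^ 2 * (c + Rbar + m) ^ (3 + ζ) * M * hpow
    _ ≤ A * (1 + 2 / (1 + ζ / 3)) ^ 2 * (c + Rbar + m) ^ (3 + ζ) * εb ^ κ * M *
          (c ^ (κ - ζ + m) * snormE ε i j ^ (ζ - κ - (2 * (k₀ : ℝ) + k₁))) := by
        gcongr
        exact rpow_le_rpow_mul_rpow_of_le_mul hεb0 hc (snormE_pos hε i j) hnear
          (by linarith [hζ.2]) (by linarith)
    _ = _ := by ring

end Regimes

theorem statement16_general (ζ κ : ℝ) (hζ : ζ ∈ Set.Ioc (-3 : ℝ) 0)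
    (hκ : κ ∈ Set.Icc (0 : ℝ) 1) (m : ℕ) (Rbar A : ℝ) (hRbar : 0 < Rbar) (hA : 0 ≤ A) :
    ∃ C : ℝ, 0 < C ∧
      ∀ ε εb : ℝ, 0 < ε → ε ≤ εb →
      ∀ ψ : ℤ → ℤ → ℝ,
        (∀ i j : ℤ, 0 ≤ ψ i j) →
        SuppIn ε (Rbar * εb) ψ →
        (ε ^ 3 * ∑' p : ℤ × ℤ, ψ p.1 p.2 = 1) →
        (∀ k₀ k₁ : ℕ, 2 * k₀ + k₁ ≤ m → ∀ i j : ℤ,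
          |fdiff ε k₀ k₁ ψ i j| ≤ A * εb ^ (-3 - (2 * (k₀ : ℝ) + (k₁ : ℝ)))) →
      ∀ (K : ℤ → ℤ → ℝ) (M : ℝ), SingBound ε ζ (m + 2) M K →
        SingBound ε (ζ - κ) m (C * εb ^ κ * M) (K - dconv ε K ψ) := by
  obtain ⟨c, hc⟩ : ∃ c, c = 2 * Rbar + 1 := ⟨_, rfl⟩
  have hα : 0 < 1 + ζ / 3 := by linarith [hζ.1]
  have hc0 : 0 < c := by linarith
  have hfar_const : 0 < 2 * 2 ^ (κ - ζ + m) * Rbar ^ κ := by positivity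
  have hnear_const : 0 < c ^ κ +
      A * (1 + 2 / (1 + ζ / 3)) ^ 2 * (c + Rbar + m) ^ (3 + ζ) * c ^ (κ - ζ + m) := by positivity
  refine ⟨_, add_pos hfar_const hnear_const, ?_⟩
  intro ε εb hε hεb ψ hψ_nonneg hψ_supp hψ_mass hψ_fdiff K M hK k₀ k₁ hk i j
  have hεb0 : 0 < εb := hε.trans_le hεb
  have hbound : 0 ≤ εb ^ κ * M * snormE ε i j ^ (ζ - κ - (2 * (k₀ : ℝ) + k₁)) :=
    mul_nonneg (mul_nonneg (by positivity) (hK.nonneg hε))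
      (Real.rpow_nonneg (snormE_pos hε i j).le _)
  rw [fdiff_sub, Pi.sub_apply, Pi.sub_apply]
  rcases le_total (c * εb) (snormE ε i j) with hfar | hnear
  · have hdiff := hK.abs_fdiff_sub_dconv_le_of_far hε (hζ.2.trans hκ.1) hκ.2
      (by positivity) hψ_nonneg hψ_supp hψ_mass hk (i := i) (j := j)
      (by rw [hc] at hfar; linarith)
    rw [Real.mul_rpow hRbar.le hεb0.le] at hdiff
    linarith [mul_nonneg hnear_const.le hbound]
  · have hkernel := (hK.fdiff hk).abs_le_of_near hε hκ.1 hnear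
    have hconv := hK.abs_fdiff_dconv_le_of_near hε hεb hζ hκ.1 hA hRbar.le hψ_supp
      (hψ_fdiff k₀ k₁ hk) hk (by linarith) hnear
    rw [Real.mul_rpow hc0.le hεb0.le, sub_right_comm] at hkernel
    linarith [abs_sub (fdiff ε k₀ k₁ K i j) (fdiff ε k₀ k₁ (dconv ε K ψ) i j),
      mul_nonneg hfar_const.le hbound]

/-- mollifying a discrete singular kernel of order `ζ ∈ (-3,0]`
by a discrete mollifier at scale `ε̄ ∈ [ε,1]` costs `ε̄^κ` and `κ` orders of
singularity. -/
theorem statement16 (ζ κ : ℝ) (hζ : ζ ∈ Set.Ioc (-3 : ℝ) 0)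
    (hκ : κ ∈ Set.Icc (0 : ℝ) 1) (m : ℕ) (Rbar A R : ℝ)
    (hRbar : 0 < Rbar) (hA : 0 < A) (hR : 0 < R) :
    ∃ C : ℝ, 0 < C ∧
      ∀ (N : ℕ) (ε : ℝ), ε = ((2 : ℝ) ^ N)⁻¹ →
      ∀ εb : ℝ, εb ∈ Set.Icc ε 1 →
      ∀ ψ : ℤ → ℤ → ℝ,
        (∀ mz j : ℤ, 0 ≤ ψ mz j) →
        (∀ mz j : ℤ, Rbar * εb < snorm ε mz j → ψ mz j = 0) →
        (ε ^ 3 * ∑' p : ℤ × ℤ, ψ p.1 p.2 = 1) →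
        (∀ k₀ k₁ : ℕ, 2 * k₀ + k₁ ≤ m + 2 → ∀ mz j : ℤ,
          |fdiff ε k₀ k₁ ψ mz j| ≤ A * εb ^ (-3 - (2 * (k₀ : ℝ) + (k₁ : ℝ)))) →
      ∀ K : ℤ → ℤ → ℝ, SuppIn ε R K →
      ∀ M : ℝ, 0 ≤ M → SingBound ε ζ (m + 2) M K →
        SingBound ε (ζ - κ) m (C * εb ^ κ * M)
          (fun mz j => K mz j - dconv ε K ψ mz j) := by
  obtain ⟨C, hC, hmollify⟩ := statement16_general ζ κ hζ hκ m Rbar A hRbar hA.le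
  refine ⟨C, hC, fun N ε hε εb hεb ψ hψ_nonneg hψ_supp hψ_mass hψ_fdiff K _ M _ hK => ?_⟩
  exact hmollify ε εb (by rw [hε]; positivity) hεb.1 ψ hψ_nonneg hψ_supp hψ_mass
    (fun k₀ k₁ hk => hψ_fdiff k₀ k₁ (by omega)) K M hK
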